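/- Let x₀ ∈ ℝ, let α ∈ (0,1] with β = 1 − α, and let ā ∈ (0,1] (the accumulated product ᾱ_{t−1}), and set ā' = α · ā (the accumulated product ᾱ_t). Then the convolution of the pushforward of the Gaussian measure gaussianReal (√ā · x₀) (1 − ā) under the map y ↦ √α · y with the Gaussian measure gaussianReal 0 β equals gaussianReal (√ā' · x₀) (1 − ā'). In symbols: ((gaussianReal (√ā·x₀) ⟨1−ā⟩).map (fun y => √α * y)) ∗ gaussianReal 0 ⟨β⟩ = gaussianReal (√ā'·x₀) ⟨1−ā'⟩, where variances are the indicated nonnegative reals. -/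

import Mathlib

open MeasureTheory ProbabilityTheory

theorem ddpm_one_step_aux (x₀ α abar : ℝ) (hα : 0 ≤ α) (v w u : NNReal)
    (hv : (v : ℝ) = 1 - abar) (hw : (w : ℝ) = 1 - α) (hu : (u : ℝ) = 1 - α * abar)
    (abar' : ℝ) (habar' : abar' = α * abar) :
    Measure.conv ((gaussianReal (Real.sqrt abar * x₀) v).map (fun y => Real.sqrt α * y))
        (gaussianReal 0 w) = gaussianReal (Real.sqrt abar' * x₀) u := by
  rw [gaussianReal_map_const_mul, gaussianReal_conv_gaussianReal, habar']
  congr 1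
  · rw [Real.sqrt_mul hα]; ring
  · apply NNReal.eq
    rw [NNReal.coe_add, NNReal.coe_mul, hv, hw, hu]
    change Real.sqrt α ^ 2 * (1 - abar) + (1 - α) = 1 - α * abar
    rw [Real.sq_sqrt hα]; ring

/-- One-step induction behind Eq. (2) of the paper: scaling a Gaussian
`N(√ā x₀, 1−ā)` by `√α` and adding independent `N(0, β)` noise with
`β = 1 − α` gives `N(√ā' x₀, 1−ā')` where `ā' = α ā`.  Here `Measure.conv`
is the additive convolution of measures (the law of a sum of independent
random variables). -/
theorem ddpm_one_step_gaussian (x₀ α abar β abar' : ℝ)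
    (hα : α ∈ Set.Ioc (0 : ℝ) 1) (habar : abar ∈ Set.Ioc (0 : ℝ) 1)
    (hβ : β = 1 - α) (habar' : abar' = α * abar) :
    Measure.conv
        ((gaussianReal (Real.sqrt abar * x₀)
            ⟨1 - abar, by linarith [habar.2]⟩).map (fun y => Real.sqrt α * y))
        (gaussianReal 0 ⟨β, by rw [hβ]; linarith [hα.2]⟩)
      = gaussianReal (Real.sqrt abar' * x₀)
          ⟨1 - abar', by rw [habar']; nlinarith [hα.1, hα.2, habar.1, habar.2]⟩ := by
  refine ddpm_one_step_aux x₀ α abar hα.1.le _ _ _ ?_ ?_ ?_ _ habar'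
  · rfl
  · exact hβ
  · change 1 - abar' = 1 - α * abar
    rw [habar']
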